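/- arXiv:1712.01542 — 2 statements merged into one kernel-verified Lean document; each statement's English description precedes it below -/
import Mathlib

section
/- Let L be a finite-dimensional nilpotent Lie algebra over a field F of nilpotency class 3 with dim [L,L] = 2. Then L is capable if and only if 3 ≤ dim (L/Z(L)) ≤ 4. -/
open Module

universe u

/-- A witness to the capability of a Lie algebra `L` over `F`: a Lie algebra `E`
together with an isomorphism `L ≃ E ⧸ Z(E)`. -/
structure CapableWitness (F : Type u) (L : Type u) [Field F] [LieRing L] [LieAlgebra F L] where
  carrier : Type u
  [lieRing : LieRing carrier]
  [lieAlgebra : LieAlgebra F carrier]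
  equiv : L ≃ₗ⁅F⁆ (carrier ⧸ LieAlgebra.center F carrier)

/-- A Lie algebra `L` over a field `F` is capable if there exists a Lie algebra `E` over `F`
with `L ≅ E ⧸ Z(E)`. -/
def IsCapable (F : Type u) (L : Type u) [Field F] [LieRing L] [LieAlgebra F L] : Prop :=
  Nonempty (CapableWitness F L)

/-!
A Lie algebra over a field is capable if and only if its epicenter, the common kernel of its scalar
2-cocycles, is zero. The central extension by the universal 2-cocycle has center exactly the
adjoined ideal when the epicenter vanishes; conversely, for `L = E / Z(E)`, composing the bracket
of `E` along a linear section with functionals on `E` produces 2-cocycles whose common kernel is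
zero.

If `L` has class 3 and `dim [L, L] = 2`, one finds `x, w` such that `y = [x, w]` and `z = [x, y]`
span `[L, L]` and `[w, y] = 0`. Let `K` be the preimage in `L` of the center of `L / F z`.
Capability and `dim (L / Z(L)) ≤ 4` are both equivalent to `K` being abelian. If `[a, b] ≠ 0` in
`K`, the cocycle identity on `x, a, b` puts `z` in the epicenter, while `x, w, a, b, y` are
independent modulo the center. If `K` is abelian, an explicit 2-cocycle detects `z`, and the center
is the common kernel of four functionals.
-/

open LieModule.Cohomology

section Epicenter

variable (R L : Type*) [CommRing R] [LieRing L] [LieAlgebra R L]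

/-- The epicenter `Z*(L)`: the elements of `L` killed by every 2-cocycle with trivial scalar
coefficients. Over a field this is the intersection of the images in `L` of the centers of all
central extensions of `L`. -/
def epicenter : Submodule R L :=
  ⨅ θ ∈ twoCocycle R L (TrivialLieModule R L R), LinearMap.ker θ.val

/-- Evaluation at `(x, y)` as a linear functional on the space of scalar 2-cocycles. -/
def evalCocycle (x y : L) : Dual R (twoCocycle R L (TrivialLieModule R L R)) where
  toFun θ := TrivialLieModule.equiv R L R (θ.1 x y)
  map_add' θ θ' := by simp
  map_smul' t θ := by simp

/-- The universal scalar 2-cocycle as a cochain: it takes values in the dual of the space of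
scalar 2-cocycles and sends `(x, y)` to evaluation at `(x, y)`. -/
def universalCochain : twoCochain R L
    (TrivialLieModule R L (Dual R (twoCocycle R L (TrivialLieModule R L R)))) where
  val := LinearMap.mk₂ R
    (fun x y ↦ (TrivialLieModule.equiv R L _).symm (evalCocycle R L x y))
    (fun x x' y ↦ by rw [← map_add]; congr 1; ext θ; simp [evalCocycle])
    (fun t x y ↦ by rw [← map_smul]; congr 1; ext θ; simp [evalCocycle])
    (fun x y y' ↦ by rw [← map_add]; congr 1; ext θ; simp [evalCocycle])
    (fun t x y ↦ by rw [← map_smul]; congr 1; ext θ; simp [evalCocycle])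
  property x := by
    rw [LinearMap.mk₂_apply, LinearEquiv.map_eq_zero_iff]
    ext θ
    simp [evalCocycle]

variable {R L}

theorem mem_epicenter {c : L} :
    c ∈ epicenter R L ↔ ∀ θ ∈ twoCocycle R L (TrivialLieModule R L R), θ c = 0 := by
  simp [epicenter, Submodule.mem_iInf]

theorem universalCochain_apply (x y : L) : universalCochain R L x y =
    (TrivialLieModule.equiv R L _).symm (evalCocycle R L x y) :=
  rfl

theorem universalCochain_mem_twoCocycle : universalCochain R L ∈ twoCocycle R L _ := by
  rw [mem_twoCocycle_iff_of_trivial]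
  intro x y z
  simp only [universalCochain_apply]
  rw [← map_add]
  congr 1
  ext θ
  simpa [evalCocycle] using congrArg (TrivialLieModule.equiv R L R)
    ((mem_twoCocycle_iff_of_trivial R L _ θ.1).1 θ.2 x y z)

theorem universalCochain_apply_eq_zero_iff {c : L} :
    universalCochain R L c = 0 ↔ c ∈ epicenter R L := by
  simp only [LinearMap.ext_iff, universalCochain_apply, LinearMap.zero_apply,
    EmbeddingLike.map_eq_zero_iff, evalCocycle, LinearMap.coe_mk, AddHom.coe_mk, mem_epicenter]
  exact ⟨fun h θ hθ q ↦ h q ⟨θ, hθ⟩, fun h q θ ↦ h θ.1 θ.2 q⟩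

end Epicenter

section CentralExtension

variable {R L E : Type*} [CommRing R] [LieRing L] [LieAlgebra R L] [LieRing E] [LieAlgebra R E]

/-- The scalar 2-cochain `(x, y) ↦ f ⁅s x, s y⁆` on `L` given by a linear section `s` of an
extension `E` of `L` and a functional `f` on `E`. -/
def sectionCochain (s : L →ₗ[R] E) (f : Dual R E) : twoCochain R L (TrivialLieModule R L R) where
  val := ((LieModule.toEnd R E E : E →ₗ[R] E →ₗ[R] E).compl₁₂ s s).compr₂
    ((TrivialLieModule.equiv R L R).symm.toLinearMap ∘ₗ f)
  property x := by simp

theorem sectionCochain_apply (s : L →ₗ[R] E) (f : Dual R E) (x y : L) :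
    sectionCochain s f x y = (TrivialLieModule.equiv R L R).symm (f ⁅s x, s y⁆) :=
  rfl

theorem lie_eq_lie_of_map_eq {π : E →ₗ⁅R⁆ L} (hker : π.ker ≤ LieAlgebra.center R E)
    {e e' : E} (h : π e = π e') (a : E) : ⁅a, e⁆ = ⁅a, e'⁆ := by
  rw [← sub_eq_zero, ← lie_sub]
  exact (LieModule.mem_maxTrivSubmodule _ _ _ _).1 (hker (by simp [h])) a

theorem sectionCochain_mem_twoCocycle {π : E →ₗ⁅R⁆ L} (hker : π.ker ≤ LieAlgebra.center R E)
    {s : L →ₗ[R] E} (hs : ∀ x, π (s x) = x) (f : Dual R E) :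
    sectionCochain s f ∈ twoCocycle R L (TrivialLieModule R L R) := by
  have lie_section (a : E) (x y : L) : ⁅a, s ⁅x, y⁆⁆ = ⁅a, ⁅s x, s y⁆⁆ :=
    lie_eq_lie_of_map_eq hker (by simp [hs]) a
  have section_lie (a : E) (x y : L) : ⁅s ⁅x, y⁆, a⁆ = ⁅⁅s x, s y⁆, a⁆ := by
    rw [← lie_skew, lie_section, lie_skew]
  rw [mem_twoCocycle_iff_of_trivial]
  intro x y z
  simp only [sectionCochain_apply, lie_section, section_lie, ← map_add, ← leibniz_lie]

end CentralExtension

section Capability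

variable {F L : Type u} [Field F] [LieRing L] [LieAlgebra F L]

theorem isCapable_iff_exists_surjective : IsCapable F L ↔
    ∃ (E : Type u) (_ : LieRing E) (_ : LieAlgebra F E) (π : E →ₗ⁅F⁆ L),
      Function.Surjective π ∧ π.ker = LieAlgebra.center F E := by
  constructor
  · rintro ⟨⟨E, e⟩⟩
    let mk : E →ₗ⁅F⁆ E ⧸ LieAlgebra.center F E :=
      { LieSubmodule.Quotient.mk' (LieAlgebra.center F E) with map_lie' := rfl }
    let π : E →ₗ⁅F⁆ L := (e.symm : _ →ₗ⁅F⁆ L).comp mk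
    refine ⟨E, _, _, π, e.symm.surjective.comp (LieSubmodule.Quotient.surjective_mk' _), ?_⟩
    ext x
    rw [LieHom.mem_ker]
    exact (EmbeddingLike.map_eq_zero_iff (f := e.symm)).trans
      (LieSubmodule.Quotient.mk_eq_zero' (N := LieAlgebra.center F E))
  · rintro ⟨E, _, _, π, hπ, hker⟩
    have e := π.quotKerEquivRange
    rw [hker, π.range_eq_top.2 hπ] at e
    exact ⟨⟨E, (e.trans LieSubalgebra.topEquiv).symm⟩⟩

theorem isCapable_of_twoCocycle {M : Type u} [AddCommGroup M] [Module F M] [LieRingModule L M]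
    [LieModule F L M] [LieModule.IsTrivial L M] (c : twoCocycle F L M)
    (hc : ∀ x, c.1 x = 0 → x = 0) : IsCapable F L := by
  let proj : LieAlgebra.ofTwoCocycle c →ₗ⁅F⁆ L :=
    { toFun x := ((LieAlgebra.ofProd c).symm x).1
      map_add' _ _ := rfl
      map_smul' _ _ := rfl
      map_lie' := rfl }
  refine isCapable_iff_exists_surjective.2
    ⟨_, _, _, proj, fun x ↦ ⟨LieAlgebra.ofProd c (x, 0), rfl⟩, ?_⟩
  ext e
  obtain ⟨⟨x, m⟩, rfl⟩ := (LieAlgebra.ofProd c).surjective e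
  rw [LieHom.mem_ker, LieModule.mem_maxTrivSubmodule]
  change x = 0 ↔ _
  constructor
  · rintro rfl e
    simp only [LieAlgebra.bracket_ofTwoCocycle, Equiv.symm_apply_apply, lie_zero, map_zero,
      trivial_lie_zero, sub_zero, add_zero]
    exact LieAlgebra.of_zero c
  · intro h
    refine hc x (LinearMap.ext fun q ↦ ?_)
    have := congrArg (fun e ↦ ((LieAlgebra.ofProd c).symm e).2) (h (LieAlgebra.ofProd c (q, 0)))
    simpa [LieAlgebra.bracket_ofTwoCocycle, trivial_lie_zero, ← twoCochain_skew _ q] using this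

theorem isCapable_iff_epicenter_eq_bot : IsCapable F L ↔ epicenter F L = ⊥ := by
  constructor
  · rw [isCapable_iff_exists_surjective]
    rintro ⟨E, _, _, π, hπ, hker⟩
    obtain ⟨s, hs⟩ := (π : E →ₗ[F] L).exists_rightInverse_of_surjective
      (LinearMap.range_eq_top.2 hπ)
    replace hs (x : L) : π (s x) = x := LinearMap.congr_fun hs x
    refine (Submodule.eq_bot_iff _).2 fun c hc ↦ ?_
    have lie_section_eq_zero (q : L) : ⁅s c, s q⁆ = 0 :=
      (Module.forall_dual_apply_eq_zero_iff F _).1 fun f ↦ LinearMap.congr_fun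
        (mem_epicenter.1 hc _ (sectionCochain_mem_twoCocycle hker.le hs f)) q
    have section_mem_ker : s c ∈ π.ker := by
      rw [hker, LieModule.mem_maxTrivSubmodule]
      intro e
      rw [← lie_skew, lie_eq_lie_of_map_eq hker.le (hs (π e)).symm, lie_section_eq_zero, neg_zero]
    rwa [LieHom.mem_ker, hs] at section_mem_ker
  · intro h
    refine isCapable_of_twoCocycle ⟨universalCochain F L, universalCochain_mem_twoCocycle⟩
      fun x hx ↦ ?_
    rwa [universalCochain_apply_eq_zero_iff, h, Submodule.mem_bot] at hx

end Capability

section Wedge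

variable {R L : Type*} [CommRing R] [LieRing L] [LieAlgebra R L]

/-- The wedge product of two linear functionals, as a scalar 2-cochain. -/
def wedge (f g : Dual R L) : twoCochain R L (TrivialLieModule R L R) where
  val := (f.smulRight g - g.smulRight f).compr₂ (TrivialLieModule.equiv R L R).symm.toLinearMap
  property x := by simp [mul_comm]

theorem wedge_apply (f g : Dual R L) (p q : L) :
    wedge f g p q = (TrivialLieModule.equiv R L R).symm (f p * g q - f q * g p) := by
  simp [wedge, ← twoCochain_val_apply, mul_comm]

theorem wedge_mem_twoCocycle {f g : Dual R L} (hf : ∀ p q : L, f ⁅p, q⁆ = 0)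
    (hg : ∀ p q : L, g ⁅p, q⁆ = 0) : wedge f g ∈ twoCocycle R L _ := by
  simp [mem_twoCocycle_iff_of_trivial, wedge_apply, hf, hg]

theorem d₁₂_mem_twoCocycle {M : Type*} [AddCommGroup M] [Module R M] [LieRingModule L M]
    [LieModule R L M] (f : oneCochain R L M) : d₁₂ R L M f ∈ twoCocycle R L M :=
  (mem_twoCocycle_iff R L M _).2 (LinearMap.congr_fun (d₂₃_comp_d₁₂ R L M) f)

theorem apply_eq_zero_of_mem_epicenter [NoZeroDivisors R] {f g : Dual R L}
    (hf : ∀ p q : L, f ⁅p, q⁆ = 0) (hg : ∀ p q : L, g ⁅p, q⁆ = 0) (hg0 : g ≠ 0)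
    {c : L} (hc : c ∈ epicenter R L) (hgc : g c = 0) : f c = 0 := by
  obtain ⟨q, hq⟩ := DFunLike.ne_iff.1 hg0
  have := LinearMap.congr_fun (mem_epicenter.1 hc _ (wedge_mem_twoCocycle hf hg)) q
  simpa [wedge_apply, hgc, show g q ≠ 0 from hq] using this

theorem lie_eq_zero_of_mem_epicenter {F : Type*} [Field F] [LieAlgebra F L] {c : L}
    (hc : c ∈ epicenter F L) (p : L) : ⁅p, c⁆ = 0 := by
  refine (forall_dual_apply_eq_zero_iff F _).1 fun f ↦ ?_
  have := LinearMap.congr_fun (mem_epicenter.1 hc _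
    (d₁₂_mem_twoCocycle ((TrivialLieModule.equiv F L F).symm.toLinearMap ∘ₗ f))) p
  rw [d₁₂_apply_apply_ofTrivial, ← map_neg, lie_skew] at this
  simpa using this

end Wedge

section LinearAlgebra

theorem card_le_rank_quotient_of_triangular {R M ι : Type*} [CommRing R] [IsDomain R]
    [AddCommGroup M] [Module R M] [Fintype ι] [LinearOrder ι] {N : Submodule R M} (v : ι → M)
    (φ : ι → Dual R M) (hN : ∀ i, N ≤ LinearMap.ker (φ i)) (hlt : ∀ i j, i < j → φ i (v j) = 0)
    (hdiag : ∀ i, φ i (v i) ≠ 0) : Fintype.card ι ≤ Module.rank R (M ⧸ N) := by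
  let A : Matrix ι ι R := .of fun i j ↦ φ i (v j)
  have hA : A.IsLowerTriangular := fun i j h ↦ hlt i j h
  have hdet : A.det ≠ 0 := by
    rw [Matrix.det_of_isLowerTriangular A hA]
    exact Finset.prod_ne_zero_iff.2 fun i _ ↦ hdiag i
  have hli : LinearIndependent R (N.mkQ ∘ v) :=
    .of_comp (LinearMap.pi fun i ↦ N.liftQ (φ i) (hN i))
      (Matrix.linearIndependent_cols_of_det_ne_zero hdet)
  simpa using hli.cardinal_lift_le_rank

theorem rank_quotient_le_card_of_iInf_ker_le {R M ι : Type*} [CommRing R] [Nontrivial R]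
    [AddCommGroup M] [Module R M] [Fintype ι] {N : Submodule R M} (φ : ι → Dual R M)
    (h : ⨅ i, LinearMap.ker (φ i) ≤ N) : Module.rank R (M ⧸ N) ≤ Fintype.card ι := by
  rw [← LinearMap.ker_pi] at h
  set Φ := LinearMap.pi φ
  have hinj : Function.Injective (Φ.ker.liftQ Φ le_rfl) :=
    LinearMap.ker_eq_bot.1 (Submodule.ker_liftQ_eq_bot' _ _ rfl)
  calc Module.rank R (M ⧸ N)
      ≤ Module.rank R (M ⧸ Φ.ker) :=
        (Submodule.factor h).rank_le_of_surjective (Submodule.factor_surjective h)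
    _ ≤ Fintype.card ι := by
        simpa using LinearMap.lift_rank_le_of_injective _ hinj

theorem exists_dual_apply_eq {K V ι : Type*} [Field K] [AddCommGroup V] [Module K V]
    {v : ι → V} (hv : LinearIndependent K v) (c : ι → K) : ∃ f : Dual K V, ∀ i, f (v i) = c i := by
  obtain ⟨f, hf⟩ := LinearMap.exists_extend ((Basis.span hv).constr K c)
  refine ⟨f, fun i ↦ ?_⟩
  rw [← (Basis.span hv).constr_basis K c i, ← hf]
  simp [Basis.span_apply]

end LinearAlgebra

/-- A frame of a Lie algebra whose derived algebra is spanned by two independent vectors `y` and `z`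
with `z` central: `x, w, y, z` satisfy the relations `⁅x, w⁆ = y`, `⁅x, y⁆ = z` of the
four-dimensional filiform algebra, and `η, ζ` read off the coordinates of a commutator. -/
structure FiliformFrame (F L : Type*) [Field F] [LieRing L] [LieAlgebra F L] where
  (x w y z : L)
  (η ζ : Dual F L)
  lie_x_w : ⁅x, w⁆ = y
  lie_x_y : ⁅x, y⁆ = z
  lie_w_y : ⁅w, y⁆ = 0
  lie_z (p : L) : ⁅p, z⁆ = 0
  η_y : η y = 1
  η_z : η z = 0
  ζ_y : ζ y = 0
  ζ_z : ζ z = 1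
  η_lie_y (p : L) : η ⁅p, y⁆ = 0
  lie_eq (p q : L) : ⁅p, q⁆ = η ⁅p, q⁆ • y + ζ ⁅p, q⁆ • z

namespace FiliformFrame

variable {F L : Type*} [Field F] [LieRing L] [LieAlgebra F L] (D : FiliformFrame F L)

attribute [simp] lie_x_w lie_x_y lie_w_y lie_z η_y η_z ζ_y ζ_z

/-- The functional `p ↦ ζ ⁅p, y⁆`, the coordinate of `p` along `x`. -/
def ξ : Dual F L := D.ζ ∘ₗ LieAlgebra.ad F L (-D.y)

/-- The functional `p ↦ η ⁅x, p⁆`, the coordinate of `p` along `w`. -/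
def α : Dual F L := D.η ∘ₗ LieAlgebra.ad F L D.x

/-- The functional `p ↦ ζ ⁅x, p⁆`, the coordinate along `y` of an element of the derived algebra. -/
def β : Dual F L := D.ζ ∘ₗ LieAlgebra.ad F L D.x

/-- The functional `p ↦ ζ ⁅w, p⁆`, which vanishes on the derived algebra and serves as a partner of
`η` in the 2-cocycle detecting `z`. -/
def γ : Dual F L := D.ζ ∘ₗ LieAlgebra.ad F L D.w

theorem ξ_apply (p : L) : D.ξ p = D.ζ ⁅p, D.y⁆ := by
  rw [ξ, LinearMap.comp_apply, LieAlgebra.ad_apply, neg_lie, lie_skew]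

theorem α_apply (p : L) : D.α p = D.η ⁅D.x, p⁆ := rfl

theorem β_apply (p : L) : D.β p = D.ζ ⁅D.x, p⁆ := rfl

theorem γ_apply (p : L) : D.γ p = D.ζ ⁅D.w, p⁆ := rfl

@[simp] theorem lie_w_x : ⁅D.w, D.x⁆ = -D.y := by rw [← lie_skew, lie_x_w]

@[simp] theorem ξ_x : D.ξ D.x = 1 := by simp [ξ_apply]
@[simp] theorem ξ_w : D.ξ D.w = 0 := by simp [ξ_apply]
@[simp] theorem ξ_y : D.ξ D.y = 0 := by simp [ξ_apply]

@[simp] theorem α_x : D.α D.x = 0 := by simp [α_apply]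
@[simp] theorem α_w : D.α D.w = 1 := by simp [α_apply]
@[simp] theorem α_y : D.α D.y = 0 := by simp [α_apply]

@[simp] theorem β_w : D.β D.w = 0 := by simp [β_apply]
@[simp] theorem β_y : D.β D.y = 1 := by simp [β_apply]

@[simp] theorem γ_x : D.γ D.x = 0 := by simp [γ_apply]
@[simp] theorem γ_y : D.γ D.y = 0 := by simp [γ_apply]

theorem lie_y (p : L) : ⁅p, D.y⁆ = D.ξ p • D.z := by
  rw [D.lie_eq, D.η_lie_y, zero_smul, zero_add, ξ_apply]

theorem y_lie (p : L) : ⁅D.y, p⁆ = -D.ξ p • D.z := by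
  rw [← lie_skew, lie_y, neg_smul]

theorem z_lie (p : L) : ⁅D.z, p⁆ = 0 := by
  rw [← lie_skew, lie_z, neg_zero]

theorem x_lie (p : L) : ⁅D.x, p⁆ = D.α p • D.y + D.β p • D.z :=
  D.lie_eq D.x p

theorem η_lie (p q : L) : D.η ⁅p, q⁆ = D.ξ p * D.α q - D.ξ q * D.α p := by
  have jacobi := congrArg D.ζ (leibniz_lie D.x p q)
  rw [D.lie_eq p q, D.x_lie p, D.x_lie q] at jacobi
  simp only [lie_add, lie_smul, add_lie, smul_lie, lie_y, y_lie, lie_z, z_lie] at jacobi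
  simp only [ξ_x, one_smul, smul_zero, add_zero, map_smul, ζ_z, smul_eq_mul, mul_one, neg_smul,
    smul_neg, map_add, map_neg] at jacobi
  linear_combination jacobi

theorem apply_lie_eq_zero {f : Dual F L} (hy : f D.y = 0) (hz : f D.z = 0) (p q : L) :
    f ⁅p, q⁆ = 0 := by
  rw [D.lie_eq]
  simp [hy, hz]

@[simp] theorem ξ_z : D.ξ D.z = 0 := by simp [ξ_apply, z_lie]
@[simp] theorem β_z : D.β D.z = 0 := by simp [β_apply]
@[simp] theorem γ_z : D.γ D.z = 0 := by simp [γ_apply]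

theorem ξ_lie (p q : L) : D.ξ ⁅p, q⁆ = 0 := D.apply_lie_eq_zero D.ξ_y D.ξ_z p q

theorem γ_lie (p q : L) : D.γ ⁅p, q⁆ = 0 := D.apply_lie_eq_zero D.γ_y D.γ_z p q

/-- The common kernel of `ξ` and `α`, which is the preimage in `L` of the center of `L ⧸ ⟨z⟩`. -/
def core : Submodule F L := D.ξ.ker ⊓ D.α.ker

theorem mem_core {a : L} : a ∈ D.core ↔ D.ξ a = 0 ∧ D.α a = 0 := by simp [core]

theorem sub_sub_mem_core (p : L) : p - D.ξ p • D.x - D.α p • D.w ∈ D.core := by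
  simp [mem_core]

/-- The common kernel `core` of `ξ` and `α` is commutative. -/
def IsCoreAbelian : Prop := ∀ a ∈ D.core, ∀ b ∈ D.core, ⁅a, b⁆ = 0

theorem lie_eq_ζ_smul_of_mem_core {a b : L} (ha : a ∈ D.core) (hb : b ∈ D.core) :
    ⁅a, b⁆ = D.ζ ⁅a, b⁆ • D.z := by
  rw [mem_core] at ha hb
  conv_lhs => rw [D.lie_eq, D.η_lie]
  simp [ha, hb]

theorem x_lie_of_mem_core {a : L} (ha : a ∈ D.core) : ⁅D.x, a⁆ = D.β a • D.z := by
  rw [x_lie, (D.mem_core.1 ha).2, zero_smul, zero_add]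

variable {D}

theorem IsCoreAbelian.ζ_lie (h : D.IsCoreAbelian) (p q : L) :
    D.ζ ⁅p, q⁆ = D.ξ p * D.β q - D.ξ q * D.β p + (D.α p * D.γ q - D.α q * D.γ p) := by
  have key := congrArg D.ζ (h _ (D.sub_sub_mem_core p) _ (D.sub_sub_mem_core q))
  have ζ_lie_x : D.ζ ⁅p, D.x⁆ = -D.β p := by rw [β_apply, ← lie_skew, map_neg]
  have ζ_lie_w : D.ζ ⁅p, D.w⁆ = -D.γ p := by rw [γ_apply, ← lie_skew, map_neg]
  simp only [sub_lie, lie_sub, smul_lie, lie_smul, map_sub, map_smul, smul_eq_mul, ζ_lie_x,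
    ζ_lie_w, ← β_apply, ← γ_apply, map_zero, lie_self, γ_x, β_w, mul_zero] at key
  linear_combination key

section Epicenter

variable (D)

theorem z_mem_epicenter_of_not_isCoreAbelian (h : ¬ D.IsCoreAbelian) : D.z ∈ epicenter F L := by
  rw [mem_epicenter]
  intro θ hθ
  rw [mem_twoCocycle_iff_of_trivial] at hθ
  have θ_z_y : θ D.z D.y = 0 := by
    rw [← twoCochain_skew, neg_eq_zero]
    simpa using (hθ D.x D.w D.z).symm
  have θ_z_of_ξ_eq_zero {p : L} (hp : D.ξ p = 0) : θ D.z p = 0 := by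
    have cocycle := hθ D.x D.y p
    rw [D.y_lie, hp, D.lie_x_y, D.x_lie] at cocycle
    simpa [← twoCochain_skew θ D.z, θ_z_y] using cocycle.symm
  have θ_z_x : θ D.z D.x = 0 := by
    simp only [IsCoreAbelian, not_forall] at h
    obtain ⟨a, ha, b, hb, hab⟩ := h
    have cocycle := hθ D.x a b
    rw [D.lie_eq_ζ_smul_of_mem_core ha hb] at hab cocycle
    rw [D.x_lie_of_mem_core ha, D.x_lie_of_mem_core hb] at cocycle
    have θ_z_a := θ_z_of_ξ_eq_zero (D.mem_core.1 ha).1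
    have θ_z_b := θ_z_of_ξ_eq_zero (D.mem_core.1 hb).1
    simpa [← twoCochain_skew θ D.z, θ_z_a, θ_z_b, left_ne_zero_of_smul hab] using cocycle
  ext p
  have hp : D.ξ (p - D.ξ p • D.x) = 0 := by simp
  simpa [θ_z_x] using θ_z_of_ξ_eq_zero hp

variable {D}

theorem IsCoreAbelian.wedge_add_wedge_mem_twoCocycle (h : D.IsCoreAbelian) :
    wedge D.ζ D.ξ + wedge D.γ D.η ∈ twoCocycle F L (TrivialLieModule F L F) := by
  rw [mem_twoCocycle_iff_of_trivial]
  intro p q r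
  simp only [add_apply_apply, wedge_apply, ← map_add, D.ξ_lie, D.γ_lie, D.η_lie, h.ζ_lie]
  congr 1
  ring

variable (D) in
theorem eq_of_mem_epicenter {c : L} (hc : c ∈ epicenter F L) : c = D.η c • D.y + D.ζ c • D.z := by
  have ξ_c : D.ξ c = 0 := by
    rw [ξ_apply, ← lie_skew, lie_eq_zero_of_mem_epicenter hc, neg_zero, map_zero]
  have ξ_ne_zero : D.ξ ≠ 0 := fun h ↦ by simpa using LinearMap.congr_fun h D.x
  rw [← sub_eq_zero, ← forall_dual_apply_eq_zero_iff F]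
  intro f
  let g : Dual F L := f - f D.y • D.η - f D.z • D.ζ
  have g_lie (p q : L) : g ⁅p, q⁆ = 0 := D.apply_lie_eq_zero (by simp [g]) (by simp [g]) p q
  have g_c : g c = 0 := apply_eq_zero_of_mem_epicenter g_lie D.ξ_lie ξ_ne_zero hc ξ_c
  simp only [g, LinearMap.sub_apply, LinearMap.smul_apply, smul_eq_mul] at g_c
  simp only [map_sub, map_add, map_smul, smul_eq_mul]
  linear_combination g_c

theorem IsCoreAbelian.epicenter_eq_bot (h : D.IsCoreAbelian) : epicenter F L = ⊥ := by
  refine (Submodule.eq_bot_iff _).2 fun c hc ↦ ?_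
  have lie_c := lie_eq_zero_of_mem_epicenter hc
  have hcoord := D.eq_of_mem_epicenter hc
  have η_c : D.η c = 0 := by
    have : D.β c = 0 := by rw [β_apply, lie_c, map_zero]
    rw [hcoord] at this
    simpa using this
  have ζ_c : D.ζ c = 0 := by
    rw [η_c, zero_smul, zero_add] at hcoord
    have ξ_c : D.ξ c = 0 := by rw [hcoord]; simp
    have γ_c : D.γ c = 0 := by rw [γ_apply, lie_c, map_zero]
    have := LinearMap.congr_fun (mem_epicenter.1 hc _ h.wedge_add_wedge_mem_twoCocycle) D.x
    simpa [wedge_apply, ξ_c, γ_c] using this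
  rw [hcoord, η_c, ζ_c, zero_smul, zero_smul, add_zero]

theorem epicenter_eq_bot_iff : epicenter F L = ⊥ ↔ D.IsCoreAbelian := by
  refine ⟨fun h ↦ by_contra fun hcore ↦ ?_, IsCoreAbelian.epicenter_eq_bot⟩
  have z_eq_zero : D.z = 0 := by
    simpa [h] using D.z_mem_epicenter_of_not_isCoreAbelian hcore
  simpa [z_eq_zero] using D.ζ_z

end Epicenter

section CentralQuotient

theorem center_le_ker_comp_ad (f : Dual F L) (p : L) :
    (LieAlgebra.center F L).toSubmodule ≤ LinearMap.ker (f ∘ₗ LieAlgebra.ad F L p) := by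
  intro c hc
  have lie_c := (LieModule.mem_maxTrivSubmodule F L L c).1 hc
  simp [lie_c]

theorem three_le_rank_center_quotient (D : FiliformFrame F L) :
    3 ≤ Module.rank F (L ⧸ LieAlgebra.center F L) := by
  refine card_le_rank_quotient_of_triangular (N := (LieAlgebra.center F L).toSubmodule)
    ![D.x, D.w, D.y] ![D.ξ, D.α, D.β] ?_ ?_ ?_
  · simp [Fin.forall_fin_succ, ξ, α, β, center_le_ker_comp_ad]
  · simp [Fin.forall_fin_succ]
  · simp [Fin.forall_fin_succ]

theorem IsCoreAbelian.rank_center_quotient_le (h : D.IsCoreAbelian) :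
    Module.rank F (L ⧸ LieAlgebra.center F L) ≤ 4 := by
  refine rank_quotient_le_card_of_iInf_ker_le (N := (LieAlgebra.center F L).toSubmodule)
    ![D.ξ, D.α, D.β, D.γ] fun c hc ↦ ?_
  obtain ⟨hξ, hα, hβ, hγ⟩ : D.ξ c = 0 ∧ D.α c = 0 ∧ D.β c = 0 ∧ D.γ c = 0 := by
    simpa [Submodule.mem_iInf, Fin.forall_fin_succ] using hc
  refine (LieModule.mem_maxTrivSubmodule _ _ _ _).2 fun p ↦ ?_
  rw [D.lie_eq, D.η_lie, h.ζ_lie]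
  simp [hξ, hα, hβ, hγ]

theorem five_le_rank_center_quotient (h : ¬ D.IsCoreAbelian) :
    5 ≤ Module.rank F (L ⧸ LieAlgebra.center F L) := by
  simp only [IsCoreAbelian, not_forall] at h
  obtain ⟨a, ha, b, hb, hab⟩ := h
  have ζ_lie_ne_zero : D.ζ ⁅a, b⁆ ≠ 0 := fun hζ ↦
    hab (by rw [D.lie_eq_ζ_smul_of_mem_core ha hb, hζ, zero_smul])
  have ζ_lie_ne_zero' : D.ζ ⁅b, a⁆ ≠ 0 := by rwa [← lie_skew, map_neg, neg_ne_zero]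
  obtain ⟨ξ_a, α_a⟩ := D.mem_core.1 ha
  obtain ⟨ξ_b, α_b⟩ := D.mem_core.1 hb
  refine card_le_rank_quotient_of_triangular (N := (LieAlgebra.center F L).toSubmodule)
    ![D.x, D.w, a, b, D.y]
    ![D.ξ, D.α, D.ζ ∘ₗ LieAlgebra.ad F L b, D.ζ ∘ₗ LieAlgebra.ad F L a, D.β] ?_ ?_ ?_
  · simp [Fin.forall_fin_succ, ξ, α, β, center_le_ker_comp_ad]
  · simp [Fin.forall_fin_succ, ξ_a, ξ_b, α_a, α_b, D.lie_y]
  · simp [Fin.forall_fin_succ, ζ_lie_ne_zero, ζ_lie_ne_zero']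

theorem rank_center_quotient_le_four_iff :
    Module.rank F (L ⧸ LieAlgebra.center F L) ≤ 4 ↔ D.IsCoreAbelian := by
  refine ⟨fun h ↦ by_contra fun hcore ↦ ?_, IsCoreAbelian.rank_center_quotient_le⟩
  have := (five_le_rank_center_quotient hcore).trans h
  norm_num at this

end CentralQuotient

end FiliformFrame

section LowerCentralSeries

open LieModule (lowerCentralSeries lowerCentralSeries_succ)

theorem lie_mem_lowerCentralSeries_succ {R L M : Type*} [CommRing R] [LieRing L] [LieAlgebra R L]
    [AddCommGroup M] [Module R M] [LieRingModule L M] {k : ℕ} {m : M}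
    (hm : m ∈ lowerCentralSeries R L M k) (p : L) : ⁅p, m⁆ ∈ lowerCentralSeries R L M (k + 1) := by
  rw [lowerCentralSeries_succ]
  exact LieSubmodule.lie_mem_lie (LieSubmodule.mem_top p) hm

theorem lie_mem_lowerCentralSeries_one {R L : Type*} [CommRing R] [LieRing L] [LieAlgebra R L]
    (p q : L) : ⁅p, q⁆ ∈ lowerCentralSeries R L L 1 :=
  lie_mem_lowerCentralSeries_succ (by simp) p

theorem linearIndependent_lie_pair {F L M : Type*} [Field F] [LieRing L] [LieAlgebra F L]
    [AddCommGroup M] [Module F M] [LieRingModule L M] [LieModule F L M] {x : L} {m : M}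
    (hxm : ⁅x, m⁆ ≠ 0) (hxxm : ⁅x, ⁅x, m⁆⁆ = 0) : LinearIndependent F ![m, ⁅x, m⁆] := by
  rw [LinearIndependent.pair_iff]
  intro s t hst
  have hs : s = 0 := by simpa [hxxm, hxm] using congrArg (⁅x, ·⁆) hst
  subst hs
  simpa [hxm] using hst

variable {F L : Type*} [Field F] [LieRing L] [LieAlgebra F L]

theorem lie_eq_zero_of_mem_lowerCentralSeries_two (h3 : lowerCentralSeries F L L 3 = ⊥) {v : L}
    (hv : v ∈ lowerCentralSeries F L L 2) (p : L) : ⁅p, v⁆ = 0 := by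
  rw [← LieSubmodule.mem_bot (R := F) (L := L), ← h3]
  exact lie_mem_lowerCentralSeries_succ hv p

theorem exists_smul_add_smul_lie_eq (h3 : lowerCentralSeries F L L 3 = ⊥)
    (hder : finrank F (lowerCentralSeries F L L 1) = 2) {x y v : L}
    (hy : y ∈ lowerCentralSeries F L L 1) (hxy : ⁅x, y⁆ ≠ 0)
    (hv : v ∈ lowerCentralSeries F L L 1) : ∃ s t : F, s • y + t • ⁅x, y⁆ = v := by
  have hli : LinearIndependent F ![y, ⁅x, y⁆] := linearIndependent_lie_pair hxy
    (lie_eq_zero_of_mem_lowerCentralSeries_two h3 (lie_mem_lowerCentralSeries_succ hy x) x)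
  have : FiniteDimensional F (lowerCentralSeries F L L 1).toSubmodule :=
    finite_of_finrank_eq_succ hder
  have hspan : Submodule.span F (Set.range ![y, ⁅x, y⁆]) =
      (lowerCentralSeries F L L 1).toSubmodule := by
    refine Submodule.eq_of_le_of_finrank_eq ?_ ?_
    · exact Submodule.span_le.2 <| Set.range_subset_iff.2 <|
        Fin.forall_fin_two.2 ⟨hy, lie_mem_lowerCentralSeries_one x y⟩
    · rw [finrank_span_eq_card hli, Fintype.card_fin]
      exact hder.symm
  rw [← LieSubmodule.mem_toSubmodule, ← hspan, Submodule.mem_span_range_iff_exists_fun] at hv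
  obtain ⟨c, hc⟩ := hv
  exact ⟨c 0, c 1, by simpa [Fin.sum_univ_two] using hc⟩

theorem exists_smul_lie_eq_of_lie_eq_zero (h3 : lowerCentralSeries F L L 3 = ⊥)
    (hder : finrank F (lowerCentralSeries F L L 1) = 2) {x y v : L}
    (hy : y ∈ lowerCentralSeries F L L 1) (hxy : ⁅x, y⁆ ≠ 0)
    (hv : v ∈ lowerCentralSeries F L L 1) (hxv : ⁅x, v⁆ = 0) : ∃ t : F, t • ⁅x, y⁆ = v := by
  obtain ⟨s, t, rfl⟩ := exists_smul_add_smul_lie_eq h3 hder hy hxy hv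
  have hxxy : ⁅x, ⁅x, y⁆⁆ = 0 :=
    lie_eq_zero_of_mem_lowerCentralSeries_two h3 (lie_mem_lowerCentralSeries_succ hy x) x
  have hs : s = 0 := by simpa [hxxy, hxy] using hxv
  exact ⟨t, by simp [hs]⟩

theorem exists_lie_ne_zero_of_lowerCentralSeries_two_ne_bot
    (h2 : lowerCentralSeries F L L 2 ≠ ⊥) :
    ∃ x : L, ∃ y ∈ lowerCentralSeries F L L 1, ⁅x, y⁆ ≠ 0 := by
  contrapose! h2
  rw [lowerCentralSeries_succ, LieSubmodule.lie_eq_bot_iff]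
  exact fun x _ y hy ↦ h2 x y hy

theorem exists_lie_lie_ne_zero (h2 : lowerCentralSeries F L L 2 ≠ ⊥)
    (h3 : lowerCentralSeries F L L 3 = ⊥)
    (hder : finrank F (lowerCentralSeries F L L 1) = 2) : ∃ x w : L, ⁅x, ⁅x, w⁆⁆ ≠ 0 := by
  obtain ⟨x, y, hy, hxy⟩ := exists_lie_ne_zero_of_lowerCentralSeries_two_ne_bot h2
  by_contra! hxx
  have lie_x_lie (p q : L) : ⁅p, ⁅x, q⁆⁆ = 0 := by
    obtain ⟨t, ht⟩ := exists_smul_lie_eq_of_lie_eq_zero h3 hder hy hxy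
      (lie_mem_lowerCentralSeries_one x q) (hxx x q)
    rw [← ht, lie_smul, lie_eq_zero_of_mem_lowerCentralSeries_two h3
      (lie_mem_lowerCentralSeries_succ hy x), smul_zero]
  have x_lie_lie (p q : L) : ⁅x, ⁅p, q⁆⁆ = 0 := by
    rw [leibniz_lie, ← lie_skew, lie_x_lie, lie_x_lie, neg_zero, add_zero]
  have le_ker : (lowerCentralSeries F L L 1).toSubmodule ≤ (LieAlgebra.ad F L x).ker := by
    rw [lowerCentralSeries_succ, LieSubmodule.lieIdeal_oper_eq_linear_span', Submodule.span_le]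
    rintro _ ⟨p, -, q, -, rfl⟩
    exact x_lie_lie p q
  exact hxy (le_ker hy)

theorem exists_lie_lie_ne_zero_and_lie_lie_eq_zero (h2 : lowerCentralSeries F L L 2 ≠ ⊥)
    (h3 : lowerCentralSeries F L L 3 = ⊥) (hder : finrank F (lowerCentralSeries F L L 1) = 2) :
    ∃ x w : L, ⁅x, ⁅x, w⁆⁆ ≠ 0 ∧ ⁅w, ⁅x, w⁆⁆ = 0 := by
  obtain ⟨x, w, hz⟩ := exists_lie_lie_ne_zero h2 h3 hder
  have hy := lie_mem_lowerCentralSeries_one (R := F) x w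
  obtain ⟨t, ht⟩ := exists_smul_lie_eq_of_lie_eq_zero h3 hder hy hz
    (lie_mem_lowerCentralSeries_one w ⁅x, w⁆)
    (lie_eq_zero_of_mem_lowerCentralSeries_two h3 (lie_mem_lowerCentralSeries_succ hy w) x)
  exact ⟨x, w - t • x, by simpa using hz, by simp [ht]⟩

theorem nonempty_filiformFrame (h2 : lowerCentralSeries F L L 2 ≠ ⊥)
    (h3 : lowerCentralSeries F L L 3 = ⊥) (hder : finrank F (lowerCentralSeries F L L 1) = 2) :
    Nonempty (FiliformFrame F L) := by
  obtain ⟨x, w, hz, hw⟩ := exists_lie_lie_ne_zero_and_lie_lie_eq_zero h2 h3 hder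
  have hy := lie_mem_lowerCentralSeries_one (R := F) x w
  have lie_z (p : L) : ⁅p, ⁅x, ⁅x, w⁆⁆⁆ = 0 :=
    lie_eq_zero_of_mem_lowerCentralSeries_two h3 (lie_mem_lowerCentralSeries_succ hy x) p
  have exists_dual := exists_dual_apply_eq (linearIndependent_lie_pair (F := F) hz (lie_z x))
  obtain ⟨η, hη⟩ := exists_dual ![1, 0]
  obtain ⟨ζ, hζ⟩ := exists_dual ![0, 1]
  obtain ⟨η_y, η_z⟩ : η ⁅x, w⁆ = 1 ∧ η ⁅x, ⁅x, w⁆⁆ = 0 := by simpa [Fin.forall_fin_two] using hη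
  obtain ⟨ζ_y, ζ_z⟩ : ζ ⁅x, w⁆ = 0 ∧ ζ ⁅x, ⁅x, w⁆⁆ = 1 := by simpa [Fin.forall_fin_two] using hζ
  have η_lie_y (p : L) : η ⁅p, ⁅x, w⁆⁆ = 0 := by
    obtain ⟨t, ht⟩ := exists_smul_lie_eq_of_lie_eq_zero h3 hder hy hz
      (lie_mem_lowerCentralSeries_one p ⁅x, w⁆)
      (lie_eq_zero_of_mem_lowerCentralSeries_two h3 (lie_mem_lowerCentralSeries_succ hy p) x)
    rw [← ht, map_smul, η_z, smul_zero]
  have lie_eq (p q : L) : ⁅p, q⁆ = η ⁅p, q⁆ • ⁅x, w⁆ + ζ ⁅p, q⁆ • ⁅x, ⁅x, w⁆⁆ := by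
    obtain ⟨s, t, h⟩ := exists_smul_add_smul_lie_eq h3 hder hy hz
      (lie_mem_lowerCentralSeries_one p q)
    simp [← h, η_y, η_z, ζ_y, ζ_z]
  exact ⟨{
    x, w, y := ⁅x, w⁆, z := ⁅x, ⁅x, w⁆⁆, η, ζ, lie_x_w := rfl, lie_x_y := rfl, lie_w_y := hw
    lie_z, η_y, η_z, ζ_y, ζ_z, η_lie_y, lie_eq }⟩

end LowerCentralSeries

theorem class_three_capable_iff_central_quotient_dim_general
    (F L : Type u) [Field F] [LieRing L] [LieAlgebra F L]
    (hclass : LieModule.lowerCentralSeries F L L 2 ≠ ⊥ ∧ LieModule.lowerCentralSeries F L L 3 = ⊥)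
    (hder : finrank F ↥(LieModule.lowerCentralSeries F L L 1) = 2) :
    IsCapable F L ↔
      3 ≤ Module.rank F (L ⧸ LieAlgebra.center F L) ∧
        Module.rank F (L ⧸ LieAlgebra.center F L) ≤ 4 := by
  obtain ⟨D⟩ := nonempty_filiformFrame hclass.1 hclass.2 hder
  rw [isCapable_iff_epicenter_eq_bot, D.epicenter_eq_bot_iff, D.rank_center_quotient_le_four_iff,
    and_iff_right D.three_le_rank_center_quotient]

/-- A finite-dimensional nilpotent Lie algebra of class 3 with 2-dimensional derived
subalgebra is capable iff `3 ≤ dim L/Z(L) ≤ 4`. -/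
theorem class_three_capable_iff_central_quotient_dim
    (F L : Type u) [Field F] [LieRing L] [LieAlgebra F L] [FiniteDimensional F L]
    (hclass : LieModule.lowerCentralSeries F L L 2 ≠ ⊥ ∧ LieModule.lowerCentralSeries F L L 3 = ⊥)
    (hder : finrank F ↥(LieModule.lowerCentralSeries F L L 1) = 2) :
    IsCapable F L ↔
      3 ≤ finrank F (L ⧸ LieAlgebra.center F L) ∧
        finrank F (L ⧸ LieAlgebra.center F L) ≤ 4 := by
  simpa only [← finrank_eq_rank, Nat.ofNat_le_cast, Nat.cast_le_ofNat] using
    class_three_capable_iff_central_quotient_dim_general F L hclass hder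
end

section
/- Let T be a finite-dimensional nilpotent Lie algebra over a field F of nilpotency class 3 with dim [T,T] = 2 such that T is stem (i.e. Z(T) ⊆ [T,T]). Then Z(T) = T³ = [T,[T,T]], dim Z(T) = 1, and the quotient Q = T/Z(T) satisfies: dim [Q,Q] = 1, [Q,Q] ⊆ Z(Q), and dim (Q/Z(Q)) = 2. -/
open Module

universe u

/-!
If `T` has class 3 and `dim T² = 2`, then `0 < T³ ≤ Z(T) < T²`, so `Z(T) = T³` is a line, and the
derived algebra of `Q = T / Z(T)` is the central line `T² / T³`.

For `dim Q / Z(Q) = 2`, write `⁅a, b⁆ = B a b • w` in `Q`, with `B` a nonzero alternating form whose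
radical is `Z(Q)`. Lift `w` to some `y` in `T`; as `y` is not central, some functional
`ℓ = f ∘ ⁅·, y⁆` is nonzero, and it descends to `Q`. The Jacobi identity of `T` becomes
`ℓ ∧ B = 0`, so `B` is a product `ℓ ∧ μ` and its radical has codimension two.
-/

section LinearAlgebra

variable {K V W : Type*} [Field K] [AddCommGroup V] [Module K V] [AddCommGroup W] [Module K W]

theorem finrank_map_add_finrank_ker {f : V →ₗ[K] W} {p : Submodule K V} [FiniteDimensional K p]
    (h : f.ker ≤ p) : finrank K (p.map f) + finrank K f.ker = finrank K p := by
  have hker : finrank K (f.domRestrict p).ker = finrank K f.ker := by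
    rw [LinearMap.ker_domRestrict]
    exact (Submodule.comapSubtypeEquivOfLe h).finrank_eq
  rw [← LinearMap.finrank_range_add_finrank_ker (f.domRestrict p), hker,
    LinearMap.range_domRestrict]

variable {ℓ : Dual K V} {B : V →ₗ[K] V →ₗ[K] K}

/-- The hypothesis `h` says that `ℓ ∧ B = 0`, and the conclusion that `B = ℓ ∧ B x`. -/
theorem apply_eq_of_cyclic_sum_eq_zero (hB : B.IsAlt)
    (h : ∀ a b c, ℓ a * B b c + ℓ b * B c a + ℓ c * B a b = 0) {x : V} (hx : ℓ x = 1) (a b : V) :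
    B a b = ℓ a * B x b - ℓ b * B x a := by
  linear_combination h x a b - B a b * hx + ℓ a * hB.neg x b

theorem apply_ne_zero_of_cyclic_sum_eq_zero (hB : B.IsAlt) (hB₀ : B ≠ 0)
    (h : ∀ a b c, ℓ a * B b c + ℓ b * B c a + ℓ c * B a b = 0) {x : V} (hx : ℓ x = 1) :
    B x ≠ 0 := fun hBx ↦ hB₀ <| by
  ext a b
  simp [apply_eq_of_cyclic_sum_eq_zero hB h hx a b, hBx]

theorem ker_prod_eq_ker_of_cyclic_sum_eq_zero (hB : B.IsAlt) (hB₀ : B ≠ 0)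
    (h : ∀ a b c, ℓ a * B b c + ℓ b * B c a + ℓ c * B a b = 0) {x : V} (hx : ℓ x = 1) :
    (ℓ.prod (B x)).ker = B.ker := by
  have hBx := apply_eq_of_cyclic_sum_eq_zero hB h hx
  ext a
  simp only [LinearMap.ker_prod, Submodule.mem_inf, LinearMap.mem_ker]
  refine ⟨fun ⟨hℓa, hxa⟩ ↦ LinearMap.ext fun b ↦ by simp [hBx a b, hℓa, hxa], fun ha ↦ ?_⟩
  have hxa : B x a = 0 := by rw [← hB.neg, ha, LinearMap.zero_apply, neg_zero]
  have hsmul : ℓ a • B x = 0 := by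
    ext b
    simpa [ha, hxa] using (hBx a b).symm
  exact ⟨(smul_eq_zero_iff_left (apply_ne_zero_of_cyclic_sum_eq_zero hB hB₀ h hx)).mp hsmul, hxa⟩

theorem prod_surjective_of_cyclic_sum_eq_zero (hB : B.IsAlt) (hB₀ : B ≠ 0)
    (h : ∀ a b c, ℓ a * B b c + ℓ b * B c a + ℓ c * B a b = 0) {x : V} (hx : ℓ x = 1) :
    Function.Surjective (ℓ.prod (B x)) := by
  rintro ⟨r, s⟩
  obtain ⟨c, rfl⟩ := LinearMap.surjective (apply_ne_zero_of_cyclic_sum_eq_zero hB hB₀ h hx) s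
  exact ⟨r • x + (c - ℓ c • x), by simp [hx, hB.self_eq_zero x]⟩

theorem finrank_quotient_ker_eq_two_of_cyclic_sum_eq_zero (hℓ : ℓ ≠ 0) (hB : B.IsAlt) (hB₀ : B ≠ 0)
    (h : ∀ a b c, ℓ a * B b c + ℓ b * B c a + ℓ c * B a b = 0) :
    finrank K (V ⧸ B.ker) = 2 := by
  obtain ⟨x, hx⟩ := LinearMap.surjective hℓ 1
  have e := (ℓ.prod (B x)).quotKerEquivOfSurjective
    (prod_surjective_of_cyclic_sum_eq_zero hB hB₀ h hx)
  rw [← ker_prod_eq_ker_of_cyclic_sum_eq_zero hB hB₀ h hx, e.finrank_eq, finrank_prod, finrank_self]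

end LinearAlgebra

section LieAlgebra

open LieModule LieAlgebra

section LowerCentralSeries

variable {R L : Type*} [CommRing R] [LieRing L] [LieAlgebra R L]

theorem lie_mem_lowerCentralSeries_one_s3 (a b : L) : ⁅a, b⁆ ∈ lowerCentralSeries R L L 1 :=
  LieSubmodule.lie_mem_lie (LieSubmodule.mem_top a) (LieSubmodule.mem_top b)

theorem lowerCentralSeries_le_center_iff {k : ℕ} :
    lowerCentralSeries R L L k ≤ center R L ↔ lowerCentralSeries R L L (k + 1) = ⊥ := by
  rw [lowerCentralSeries_succ, le_max_triv_iff_bracket_eq_bot]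

theorem toSubmodule_lowerCentralSeries_quotient (I : LieIdeal R L) (k : ℕ) :
    (lowerCentralSeries R (L ⧸ I) (L ⧸ I) k).toSubmodule =
      (lowerCentralSeries R L L k).toSubmodule.map I.toSubmodule.mkQ := by
  rw [← coe_lowerCentralSeries_ideal_quot_eq,
    ← map_lowerCentralSeries_eq k (LieSubmodule.Quotient.surjective_mk' I)]
  rfl

theorem lowerCentralSeries_quotient_eq_bot_iff {I : LieIdeal R L} {k : ℕ} :
    lowerCentralSeries R (L ⧸ I) (L ⧸ I) k = ⊥ ↔ lowerCentralSeries R L L k ≤ I := by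
  rw [← LieSubmodule.toSubmodule_eq_bot, toSubmodule_lowerCentralSeries_quotient,
    eq_bot_iff, Submodule.map_le_iff_le_comap, Submodule.comap_bot, Submodule.ker_mkQ,
    LieSubmodule.toSubmodule_le_toSubmodule]

end LowerCentralSeries

variable {F L : Type*} [Field F] [LieRing L] [LieAlgebra F L]

theorem exists_lie_eq_smul_of_finrank_lowerCentralSeries_one
    (h : finrank F (lowerCentralSeries F L L 1) = 1) :
    ∃ w : L, w ≠ 0 ∧ ∃ B : L →ₗ[F] L →ₗ[F] F, B ≠ 0 ∧ ∀ a b, ⁅a, b⁆ = B a b • w := by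
  obtain ⟨⟨w, _⟩, hw, hspan⟩ := finrank_eq_one_iff'.mp h
  have hw₀ : w ≠ 0 := fun hw₀ ↦ hw (Subtype.ext hw₀)
  obtain ⟨g, hg⟩ := Projective.exists_dual_eq_one F hw₀
  let B : L →ₗ[F] L →ₗ[F] F := (toEnd F L L : L →ₗ[F] End F L).compr₂ g
  have hB (a b : L) : ⁅a, b⁆ = B a b • w := by
    obtain ⟨r, hr⟩ := hspan ⟨⁅a, b⁆, lie_mem_lowerCentralSeries_one_s3 a b⟩
    have hab : ⁅a, b⁆ = r • w := congrArg Subtype.val hr.symm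
    simp [B, hab, hg]
  refine ⟨w, hw₀, B, fun hB₀ ↦ ?_, hB⟩
  have hbot : lowerCentralSeries F L L 1 = ⊥ :=
    lowerCentralSeries_le_center_iff.mp fun b _ a ↦ by simp [hB, hB₀]
  rw [hbot] at h
  exact zero_ne_one (finrank_zero_of_subsingleton.symm.trans h)

theorem ker_eq_center_of_lie_eq_smul {w : L} (hw : w ≠ 0) {B : L →ₗ[F] L →ₗ[F] F}
    (hB : ∀ a b, ⁅a, b⁆ = B a b • w) : B.ker = (center F L).toSubmodule := by
  ext a
  rw [← self_module_ker_eq_center, LieSubmodule.mem_toSubmodule, LieModule.mem_ker]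
  simp [LinearMap.ext_iff, hB, hw]

theorem exists_dual_apply_lie_ne_zero {y : L} (hy : y ∉ center F L) :
    ∃ f : Dual F L, ∃ x : L, f ⁅x, y⁆ ≠ 0 := by
  rw [mem_maxTrivSubmodule, not_forall] at hy
  obtain ⟨x, hx⟩ := hy
  obtain ⟨f, hf⟩ := Projective.exists_dual_ne_zero F hx
  exact ⟨f, x, hf⟩

theorem exists_dual_quotient_center_cyclic_sum_eq_zero {w : L ⧸ center F L} (hw : w ≠ 0)
    {B : (L ⧸ center F L) →ₗ[F] (L ⧸ center F L) →ₗ[F] F} (hB : ∀ a b, ⁅a, b⁆ = B a b • w) :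
    ∃ ℓ : Dual F (L ⧸ center F L), ℓ ≠ 0 ∧
      ∀ a b c, ℓ a * B b c + ℓ b * B c a + ℓ c * B a b = 0 := by
  obtain ⟨y, rfl⟩ := LieSubmodule.Quotient.surjective_mk' _ w
  have hy : y ∉ center F L := fun hy ↦ hw (LieSubmodule.Quotient.mk_eq_zero'.mpr hy)
  obtain ⟨f, x, hfx⟩ := exists_dual_apply_lie_ne_zero hy
  let ℓ : Dual F (L ⧸ center F L) := (center F L).toSubmodule.liftQ
    (f ∘ₗ (toEnd F L L : L →ₗ[F] End F L).flip y) fun z hz ↦ by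
      simp [← lie_skew z y, hz y]
  have hℓ (a : L) : ℓ (LieSubmodule.Quotient.mk a) = f ⁅a, y⁆ := rfl
  have hlie (a b c : L) : ⁅a, ⁅b, c⁆⁆ =
      B (LieSubmodule.Quotient.mk b) (LieSubmodule.Quotient.mk c) • ⁅a, y⁆ := by
    have hz : ⁅b, c⁆ - B (LieSubmodule.Quotient.mk b) (LieSubmodule.Quotient.mk c) • y ∈
        center F L :=
      (Submodule.Quotient.eq _).mp (hB (LieSubmodule.Quotient.mk b) (LieSubmodule.Quotient.mk c))
    rw [← lie_smul, ← sub_eq_zero, ← lie_sub]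
    exact hz a
  refine ⟨ℓ, fun hℓ₀ ↦ hfx (by rw [← hℓ, hℓ₀, LinearMap.zero_apply]), fun a b c ↦ ?_⟩
  obtain ⟨a, rfl⟩ := LieSubmodule.Quotient.surjective_mk' _ a
  obtain ⟨b, rfl⟩ := LieSubmodule.Quotient.surjective_mk' _ b
  obtain ⟨c, rfl⟩ := LieSubmodule.Quotient.surjective_mk' _ c
  have hjacobi := congrArg f (lie_jacobi a b c)
  simp only [hlie, map_add, map_smul, map_zero, smul_eq_mul] at hjacobi
  simp only [LieSubmodule.Quotient.mk'_apply, hℓ]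
  linear_combination hjacobi

/-- Equivalently, a capable Lie algebra with one-dimensional derived algebra has a center of
codimension two. -/
theorem finrank_quotient_center_eq_two_of_finrank_lowerCentralSeries_one
    (h : finrank F (lowerCentralSeries F (L ⧸ center F L) (L ⧸ center F L) 1) = 1) :
    finrank F ((L ⧸ center F L) ⧸ center F (L ⧸ center F L)) = 2 := by
  obtain ⟨w, hw, B, hB₀, hB⟩ := exists_lie_eq_smul_of_finrank_lowerCentralSeries_one h
  obtain ⟨ℓ, hℓ, hjacobi⟩ := exists_dual_quotient_center_cyclic_sum_eq_zero hw hB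
  have hBalt : B.IsAlt := fun a ↦ (smul_eq_zero_iff_left hw).mp (by rw [← hB, lie_self])
  have hrank := finrank_quotient_ker_eq_two_of_cyclic_sum_eq_zero hℓ hBalt hB₀ hjacobi
  rwa [ker_eq_center_of_lie_eq_smul hw hB] at hrank

variable {k : ℕ}

theorem center_lt_lowerCentralSeries (hstem : center F L ≤ lowerCentralSeries F L L k)
    (h : lowerCentralSeries F L L (k + 1) ≠ ⊥) : center F L < lowerCentralSeries F L L k :=
  hstem.lt_of_not_ge (lowerCentralSeries_le_center_iff.not.mpr h)

theorem center_eq_lowerCentralSeries_succ_and_finrank_eq_one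
    (hstem : center F L ≤ lowerCentralSeries F L L k)
    (hrank : finrank F (lowerCentralSeries F L L k) = 2)
    (hne : lowerCentralSeries F L L (k + 1) ≠ ⊥) (hbot : lowerCentralSeries F L L (k + 2) = ⊥) :
    center F L = lowerCentralSeries F L L (k + 1) ∧ finrank F (center F L) = 1 := by
  have hle : lowerCentralSeries F L L (k + 1) ≤ center F L :=
    lowerCentralSeries_le_center_iff.mpr hbot
  have : FiniteDimensional F (lowerCentralSeries F L L k).toSubmodule :=
    finite_of_finrank_pos (hrank.symm ▸ two_pos)
  have : FiniteDimensional F (center F L).toSubmodule :=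
    Submodule.finiteDimensional_of_le hstem
  have : FiniteDimensional F (lowerCentralSeries F L L (k + 1)).toSubmodule :=
    Submodule.finiteDimensional_of_le hle
  have hlt : finrank F (center F L) < finrank F (lowerCentralSeries F L L k) :=
    Submodule.finrank_lt_finrank_of_lt (center_lt_lowerCentralSeries hstem hne)
  have hmono : finrank F (lowerCentralSeries F L L (k + 1)) ≤ finrank F (center F L) :=
    Submodule.finrank_mono hle
  have hrank_ne : finrank F (lowerCentralSeries F L L (k + 1)) ≠ 0 :=
    fun h₀ ↦ hne ((LieSubmodule.toSubmodule_eq_bot _).mp (Submodule.finrank_eq_zero.mp h₀))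
  have hge : finrank F (center F L) ≤ finrank F (lowerCentralSeries F L L (k + 1)) := by lia
  have heq : lowerCentralSeries F L L (k + 1) = center F L :=
    LieSubmodule.toSubmodule_injective (Submodule.eq_of_le_of_finrank_le hle hge)
  exact ⟨heq.symm, by lia⟩

theorem finrank_lowerCentralSeries_quotient_add_finrank {I : LieIdeal F L}
    [FiniteDimensional F (lowerCentralSeries F L L k)] (hI : I ≤ lowerCentralSeries F L L k) :
    finrank F (lowerCentralSeries F (L ⧸ I) (L ⧸ I) k) + finrank F I =
      finrank F (lowerCentralSeries F L L k) := by
  have hker : I.toSubmodule.mkQ.ker ≤ (lowerCentralSeries F L L k).toSubmodule := by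
    rwa [Submodule.ker_mkQ]
  have hrank := finrank_map_add_finrank_ker hker
  rwa [← toSubmodule_lowerCentralSeries_quotient, Submodule.ker_mkQ] at hrank

theorem stem_class_three_center_eq_third_term_general
    (hne : lowerCentralSeries F L L 2 ≠ ⊥) (hbot : lowerCentralSeries F L L 3 = ⊥)
    (hder : finrank F (lowerCentralSeries F L L 1) = 2)
    (hstem : center F L ≤ lowerCentralSeries F L L 1) :
    center F L = lowerCentralSeries F L L 2 ∧
    finrank F (center F L) = 1 ∧
    finrank F (lowerCentralSeries F (L ⧸ center F L) (L ⧸ center F L) 1) = 1 ∧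
    lowerCentralSeries F (L ⧸ center F L) (L ⧸ center F L) 1 ≤ center F (L ⧸ center F L) ∧
    finrank F ((L ⧸ center F L) ⧸ center F (L ⧸ center F L)) = 2 := by
  have : FiniteDimensional F (lowerCentralSeries F L L 1) :=
    finite_of_finrank_pos (hder.symm ▸ two_pos)
  obtain ⟨hcenter, hrank⟩ :=
    center_eq_lowerCentralSeries_succ_and_finrank_eq_one hstem hder hne hbot
  have hadd := finrank_lowerCentralSeries_quotient_add_finrank hstem
  have hderQ : finrank F (lowerCentralSeries F (L ⧸ center F L) (L ⧸ center F L) 1) = 1 := by lia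
  have hcentral :
      lowerCentralSeries F (L ⧸ center F L) (L ⧸ center F L) 1 ≤ center F (L ⧸ center F L) :=
    lowerCentralSeries_le_center_iff.mpr (lowerCentralSeries_quotient_eq_bot_iff.mpr hcenter.ge)
  exact ⟨hcenter, hrank, hderQ, hcentral,
    finrank_quotient_center_eq_two_of_finrank_lowerCentralSeries_one hderQ⟩

end LieAlgebra

/-- For a finite-dimensional stem nilpotent Lie algebra `T` of class 3 with
`dim [T,T] = 2`: `Z(T) = T³`, `dim Z(T) = 1`, and `Q = T/Z(T)` satisfies `dim [Q,Q] = 1`,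
`[Q,Q] ⊆ Z(Q)` and `dim Q/Z(Q) = 2`. -/
theorem stem_class_three_center_eq_third_term
    (F T : Type u) [Field F] [LieRing T] [LieAlgebra F T] [FiniteDimensional F T]
    (hclass : LieModule.lowerCentralSeries F T T 2 ≠ ⊥ ∧ LieModule.lowerCentralSeries F T T 3 = ⊥)
    (hder : finrank F ↥(LieModule.lowerCentralSeries F T T 1) = 2)
    (hstem : LieAlgebra.center F T ≤ LieModule.lowerCentralSeries F T T 1) :
    LieAlgebra.center F T = LieModule.lowerCentralSeries F T T 2 ∧
    finrank F ↥(LieAlgebra.center F T) = 1 ∧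
    finrank F ↥(LieModule.lowerCentralSeries F (T ⧸ LieAlgebra.center F T) (T ⧸ LieAlgebra.center F T) 1) = 1 ∧
    LieModule.lowerCentralSeries F (T ⧸ LieAlgebra.center F T) (T ⧸ LieAlgebra.center F T) 1 ≤
      LieAlgebra.center F (T ⧸ LieAlgebra.center F T) ∧
    finrank F ((T ⧸ LieAlgebra.center F T) ⧸
      LieAlgebra.center F (T ⧸ LieAlgebra.center F T)) = 2 :=
  stem_class_three_center_eq_third_term_general hclass.1 hclass.2 hder hstem
end
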